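/- arXiv:1805.09757 — 2 statements merged into one kernel-verified Lean document; each statement's English description precedes it below -/
import Mathlib

section
/- (Theorem 1, part 2) In a hidden Markov tree with strictly positive data likelihood P(X) > 0, for every node n the normalized quantity P′(y_n) / Σ_{y_n'∈{0,1}} P′(y_n'), where P′(y_n) = f_n^i(y_n) · g_n^i(y_n) · P(x_n|y_n), equals the posterior marginal distribution P(y_n | X) = P(X, y_n)/P(X) of the label of node n given all observed features. -/
/-!
The heart of the matter is the unnormalized identity `f_n^i(y) g_n^i(y) P(x_n|y) = P(X, y_n = y)`;
dividing by its sum over `y` gives the theorem.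

Upward messages compute partition functions. Call `b` a family of upward messages for feature
likelihoods `px` if it satisfies the recursion of `f^o` (`IsMsg`). Starting from `∑_y b_root(y)`,
expand one message after another: at each stage there is a child-closed set `E` of expanded nodes,
the labels in play are those of the root and of the parents of `E` (`active`), nodes of `E`
contribute their true factor and the other active nodes contribute their message. Expanding one more
node does not change the value (`partialSum_insert`), and with everything expanded the value
is `∑_Y P(X, Y)` (`sum_full_eq_sum_msg_root`). This holds for arbitrary likelihoods.

Conditioning is a change of likelihoods. `P(X, y_n = y)` is the partition function for the
likelihoods `px'` obtained by multiplying `P(x_n|·)` with the indicator of `y`. Let `b'` be the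
corresponding messages. They agree with `f^o` away from the path from `n` to the root. Along that
path `∑_z b'_m(z) g_m^i(z)` does not change, because the recursion of `g^i` is the transpose
of the recursion of `f^o`. At the root the value is `P(X, y_n = y)`, since `g^i_root = 1`, and at
`n` it is `f_n^o(y) g_n^i(y)`.
-/

open Finset

/-- A finite reverse tree: every node has at most one child (`child n = none` only
for the unique root), and the parent relation (`child k = some n` meaning `k` is a
parent of `n`) is acyclic. -/
structure RevTree (N : ℕ) where
  child : Fin N → Option (Fin N)
  acyclic : ∀ n : Fin N, ¬ Relation.TransGen (fun a b => child a = some b) n n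
  root : Fin N
  child_root : child root = none
  root_unique : ∀ n : Fin N, child n = none → n = root

namespace RevTree

variable {N : ℕ}

/-- The set of parents of a node. -/
def parents (T : RevTree N) (n : Fin N) : Finset (Fin N) :=
  Finset.univ.filter fun k => T.child k = some n

/-- A leaf is a node with no parents. -/
def IsLeaf (T : RevTree N) (n : Fin N) : Prop :=
  T.parents n = ∅

instance (T : RevTree N) (n : Fin N) : Decidable (T.IsLeaf n) :=
  inferInstanceAs (Decidable (T.parents n = ∅))

open scoped Classical in
/-- `tree n`: all nodes from which `n` is reachable by following child edges,
including `n` itself. -/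
noncomputable def tree (T : RevTree N) (n : Fin N) : Finset (Fin N) :=
  Finset.univ.filter fun m =>
    Relation.ReflTransGen (fun a b => T.child a = some b) m n

/-- `subtree n = tree n \ {n}`: the strict descendants (in the parent direction). -/
noncomputable def subtree (T : RevTree N) (n : Fin N) : Finset (Fin N) :=
  T.tree n \ {n}

/-- `pre n`: complement of `tree n`. -/
noncomputable def pre (T : RevTree N) (n : Fin N) : Finset (Fin N) :=
  Finset.univ \ T.tree n

/-- `passed n`: complement of `subtree n`. -/
noncomputable def passed (T : RevTree N) (n : Fin N) : Finset (Fin N) :=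
  Finset.univ \ T.subtree n

/-- The siblings of `n` with respect to its child `c`: the other parents of `c`. -/
def siblings (T : RevTree N) (n c : Fin N) : Finset (Fin N) :=
  T.parents c \ {n}

end RevTree

/-- Leaf class prior `P(y) = π^y (1-π)^(1-y)`. -/
noncomputable def leafPrior (π : ℝ) (y : Fin 2) : ℝ :=
  π ^ (y : ℕ) * (1 - π) ^ (1 - (y : ℕ))

/-- Class transition probability of a node with label `y` given the product `z`
of its parents' labels: `ρ^(yz) (1-ρ)^((1-y)z) 0^(y(1-z)) 1^((1-y)(1-z))`
(note `(0:ℝ)^0 = 1`). -/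
noncomputable def transProb (ρ : ℝ) (y z : ℕ) : ℝ :=
  ρ ^ (y * z) * (1 - ρ) ^ ((1 - y) * z) * (0 : ℝ) ^ (y * (1 - z)) *
    (1 : ℝ) ^ ((1 - y) * (1 - z))

/-- The class factor of node `n` in a full labeling `Y`: the leaf prior for leaves,
and the transition probability given the product of the parents' labels otherwise. -/
noncomputable def nodeFactor {N : ℕ} (T : RevTree N) (π ρ : ℝ) (Y : Fin N → Fin 2)
    (n : Fin N) : ℝ :=
  if T.IsLeaf n then leafPrior π (Y n)
  else transProb ρ (Y n : ℕ) (∏ k ∈ T.parents n, (Y k : ℕ))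

/-- The marginal `P(x_S, y_T)`: sum over all labelings agreeing with `σ` on `Tset`
of the product of the feature likelihoods over `S` times the product of all class
factors. -/
noncomputable def marginal {N : ℕ} (T : RevTree N) (π ρ : ℝ) (px : Fin N → Fin 2 → ℝ)
    (S Tset : Finset (Fin N)) (σ : Fin N → Fin 2) : ℝ :=
  ∑ Y ∈ Finset.univ.filter (fun Y : Fin N → Fin 2 => ∀ t ∈ Tset, Y t = σ t),
    (∏ m ∈ S, px m (Y m)) * ∏ m, nodeFactor T π ρ Y m

/-- Assignments of binary labels to the nodes in `S` (encoded as functions on all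
nodes that are `0` outside `S`, so each assignment to `S` occurs exactly once). -/
def assignments {N : ℕ} (S : Finset (Fin N)) : Finset (Fin N → Fin 2) :=
  Finset.univ.filter fun u => ∀ k ∉ S, u k = 0

namespace HMT

variable {N : ℕ}

/-! ### Sums over assignments -/

lemma mem_assignments {S : Finset (Fin N)} {u : Fin N → Fin 2} :
    u ∈ assignments S ↔ ∀ k ∉ S, u k = 0 := by
  simp [assignments]

lemma mem_parents (T : RevTree N) {k n : Fin N} : k ∈ T.parents n ↔ T.child k = some n := by
  simp [RevTree.parents]

lemma sum_assignments_union {A P : Finset (Fin N)} (hd : Disjoint A P)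
    (F : (Fin N → Fin 2) → ℝ) :
    ∑ Y ∈ assignments (A ∪ P), F Y =
      ∑ u ∈ assignments A, ∑ v ∈ assignments P, F (fun k => if k ∈ P then v k else u k) := by
  rw [← Finset.sum_product']
  refine Finset.sum_bij' (fun Y _ => ((fun k => if k ∈ P then 0 else Y k : Fin N → Fin 2),
      (fun k => if k ∈ P then Y k else 0 : Fin N → Fin 2)))
    (fun p _ => fun k => if k ∈ P then p.2 k else p.1 k) ?_ ?_ ?_ ?_ ?_
  · intro Y hY
    rw [mem_assignments] at hY
    simp only [Finset.mem_product, mem_assignments]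
    refine ⟨fun k hk => ?_, fun k hk => by simp [hk]⟩
    by_cases hP : k ∈ P
    · simp [hP]
    · simp [hP, hY k (by simp [hk, hP])]
  · intro p hp
    simp only [Finset.mem_product, mem_assignments] at hp
    rw [mem_assignments]
    intro k hk
    simp only [Finset.mem_union, not_or] at hk
    simp [hk.2, hp.1 k hk.1]
  · intro Y _
    funext k
    by_cases hP : k ∈ P <;> simp [hP]
  · rintro ⟨u, v⟩ hp
    simp only [Finset.mem_product, mem_assignments] at hp
    ext k
    · by_cases hP : k ∈ P
      · simp [hP, hp.1 k (Finset.disjoint_right.mp hd hP)]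
      · simp [hP]
    · by_cases hP : k ∈ P
      · simp [hP]
      · simp [hP, hp.2 k hP]
  · intro Y _
    congr 1
    funext k
    by_cases hP : k ∈ P <;> simp [hP]

lemma sum_assignments_singleton (k : Fin N) (F : (Fin N → Fin 2) → ℝ) :
    ∑ u ∈ assignments {k}, F u = ∑ y : Fin 2, F (Function.update 0 k y) := by
  refine Finset.sum_bij' (fun u _ => u k) (fun y _ => Function.update 0 k y) ?_ ?_ ?_ ?_ ?_
  · simp
  · intro y _
    rw [mem_assignments]
    intro j hj
    simp only [Finset.mem_singleton] at hj
    simp [hj]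
  · intro u hu
    rw [mem_assignments] at hu
    funext j
    by_cases hj : j = k
    · subst hj; simp
    · simp [hj, hu j (by simpa using hj)]
  · simp
  · intro u hu
    rw [mem_assignments] at hu
    congr 1
    funext j
    by_cases hj : j = k
    · subst hj; simp
    · simp [hj, hu j (by simpa using hj)]

/-! ### The parent relation -/

lemma not_mem_parents_self (T : RevTree N) (e : Fin N) : e ∉ T.parents e := by
  rw [mem_parents]
  exact fun h => T.acyclic e (Relation.TransGen.single h)

lemma wf_parent (T : RevTree N) : WellFounded (fun a b => T.child a = some b) := by
  have : IsTrans (Fin N) (Relation.TransGen fun a b => T.child a = some b) :=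
    ⟨fun _ _ _ => Relation.TransGen.trans⟩
  have : Std.Irrefl (Relation.TransGen fun a b => T.child a = some b) := ⟨T.acyclic⟩
  exact Subrelation.wf (r := Relation.TransGen fun a b => T.child a = some b)
    (fun h => Relation.TransGen.single h)
    (Finite.wellFounded_of_trans_of_irrefl (Relation.TransGen fun a b => T.child a = some b))

lemma wf_child (T : RevTree N) : WellFounded (fun b a => T.child a = some b) := by
  have : IsTrans (Fin N) (Function.swap (Relation.TransGen fun a b => T.child a = some b)) :=
    ⟨fun _ _ _ h h' => Relation.TransGen.trans h' h⟩
  have : Std.Irrefl (Function.swap (Relation.TransGen fun a b => T.child a = some b)) :=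
    ⟨T.acyclic⟩
  exact Subrelation.wf
    (r := Function.swap (Relation.TransGen fun a b => T.child a = some b))
    (fun h => Relation.TransGen.single h) (Finite.wellFounded_of_trans_of_irrefl _)

/-! ### Upward messages -/

lemma nodeFactor_congr (T : RevTree N) (π ρ : ℝ) {Y Y' : Fin N → Fin 2} {m : Fin N}
    (h : Y m = Y' m) (hp : ∀ k ∈ T.parents m, Y k = Y' k) :
    nodeFactor T π ρ Y m = nodeFactor T π ρ Y' m := by
  unfold nodeFactor
  rw [h, Finset.prod_congr rfl fun k hk => by rw [hp k hk]]

/-- `b` satisfies the recursion of the outgoing upward messages `f^o` for the likelihoods `px`.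
Leaves need no separate clause: for them `assignments ∅` has a single element. The label `y` of
`e` is written into `v` only so that `nodeFactor` can be applied. -/
def IsMsg (T : RevTree N) (π ρ : ℝ) (px b : Fin N → Fin 2 → ℝ) : Prop :=
  ∀ e y, b e y = px e y * ∑ v ∈ assignments (T.parents e),
    nodeFactor T π ρ (Function.update v e y) e * ∏ k ∈ T.parents e, b k (v k)

lemma exists_isMsg (T : RevTree N) (π ρ : ℝ) (px : Fin N → Fin 2 → ℝ) :
    ∃ b, IsMsg T π ρ px b := by
  refine ⟨(wf_parent T).fix fun e rec y => px e y * ∑ v ∈ assignments (T.parents e),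
    nodeFactor T π ρ (Function.update v e y) e *
      ∏ k ∈ (T.parents e).attach, rec k.1 ((mem_parents T).1 k.2) (v k.1), ?_⟩
  intro e y
  rw [WellFounded.fix_eq]
  congr 1
  refine Finset.sum_congr rfl fun v _ => ?_
  congr 1
  exact Finset.prod_attach (T.parents e) fun k =>
    WellFounded.fix (C := fun _ => Fin 2 → ℝ) (wf_parent T) _ k (v k)

/-! ### Partition functions by successive expansion -/

/-- The nodes whose labels are summed over once the nodes of `E` are expanded: the root and the
parents of nodes of `E`. -/
def active (T : RevTree N) (E : Finset (Fin N)) : Finset (Fin N) :=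
  Finset.univ.filter fun m => m = T.root ∨ ∃ c ∈ E, T.child m = some c

lemma mem_active {T : RevTree N} {E : Finset (Fin N)} {m : Fin N} :
    m ∈ active T E ↔ m = T.root ∨ ∃ c ∈ E, T.child m = some c := by
  simp [active]

/-- The sum over labels of the active nodes in which nodes of `E` contribute their likelihood
and class factor, and the remaining active nodes contribute the message `b`. -/
noncomputable def partialSum (T : RevTree N) (π ρ : ℝ) (px b : Fin N → Fin 2 → ℝ)
    (E : Finset (Fin N)) : ℝ :=
  ∑ Y ∈ assignments (active T E),
    (∏ m ∈ E, px m (Y m) * nodeFactor T π ρ Y m) * ∏ m ∈ active T E \ E, b m (Y m)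

lemma subset_active {T : RevTree N} {E : Finset (Fin N)}
    (hE : ∀ m ∈ E, ∀ c, T.child m = some c → c ∈ E) : E ⊆ active T E := by
  intro m hm
  rw [mem_active]
  rcases h : T.child m with _ | c
  · exact Or.inl (T.root_unique m h)
  · exact Or.inr ⟨c, hE m hm c h, rfl⟩

lemma active_insert (T : RevTree N) (E : Finset (Fin N)) (e : Fin N) :
    active T (insert e E) = active T E ∪ T.parents e := by
  ext m
  simp only [mem_active, Finset.mem_union, mem_parents, Finset.mem_insert]
  constructor
  · rintro (h | ⟨c, rfl | hc, h⟩)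
    · exact Or.inl (Or.inl h)
    · exact Or.inr h
    · exact Or.inl (Or.inr ⟨c, hc, h⟩)
  · rintro ((h | ⟨c, hc, h⟩) | h)
    · exact Or.inl h
    · exact Or.inr ⟨c, Or.inr hc, h⟩
    · exact Or.inr ⟨e, Or.inl rfl, h⟩

lemma disjoint_active_parents {T : RevTree N} {E : Finset (Fin N)} {e : Fin N} (he : e ∉ E) :
    Disjoint (active T E) (T.parents e) := by
  rw [Finset.disjoint_left]
  intro m hm hp
  rw [mem_parents] at hp
  rcases mem_active.1 hm with rfl | ⟨c, hc, h⟩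
  · simp [T.child_root] at hp
  · rw [hp] at h
    exact he (by simpa using (Option.some.inj h) ▸ hc)

/-- Replacing the message at one active node `e` by its recursive definition does not change the
partial sum. -/
lemma partialSum_insert {T : RevTree N} {π ρ : ℝ} {px b : Fin N → Fin 2 → ℝ}
    (hb : IsMsg T π ρ px b) {E : Finset (Fin N)}
    (hE : ∀ m ∈ E, ∀ c, T.child m = some c → c ∈ E) {e : Fin N} (he : e ∉ E)
    (heA : e ∈ active T E) :
    partialSum T π ρ px b (insert e E) = partialSum T π ρ px b E := by
  have hd := disjoint_active_parents (T := T) he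
  have hsub := subset_active hE
  have hnP : ∀ m ∈ active T E, m ∉ T.parents e := fun m hm => Finset.disjoint_left.1 hd hm
  unfold partialSum
  rw [active_insert, sum_assignments_union hd]
  refine Finset.sum_congr rfl fun u _ => ?_
  have hset : (active T E ∪ T.parents e) \ insert e E =
      ((active T E \ E).erase e) ∪ T.parents e := by
    ext m
    simp only [Finset.mem_sdiff, Finset.mem_union, Finset.mem_insert, Finset.mem_erase, not_or]
    constructor
    · rintro ⟨h | h, h1, h2⟩
      · exact Or.inl ⟨h1, h, h2⟩
      · exact Or.inr h
    · rintro (⟨h1, h, h2⟩ | h)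
      · exact ⟨Or.inl h, h1, h2⟩
      · refine ⟨Or.inr h, ?_, fun h' => hnP m (hsub h') h⟩
        rintro rfl
        exact not_mem_parents_self T _ h
  have hdis : Disjoint ((active T E \ E).erase e) (T.parents e) :=
    hd.mono_left fun m hm => (Finset.mem_sdiff.1 (Finset.mem_of_mem_erase hm)).1
  rw [← Finset.mul_prod_erase (active T E \ E) (fun m => b m (u m))
    (Finset.mem_sdiff.2 ⟨heA, he⟩), hb e (u e)]
  simp only [Finset.mul_sum, Finset.sum_mul]
  refine Finset.sum_congr rfl fun v _ => ?_
  rw [hset, Finset.prod_union hdis, Finset.prod_insert he]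
  have h1 : ∏ m ∈ E, px m (if m ∈ T.parents e then v m else u m) *
        nodeFactor T π ρ (fun k => if k ∈ T.parents e then v k else u k) m =
      ∏ m ∈ E, px m (u m) * nodeFactor T π ρ u m := by
    refine Finset.prod_congr rfl fun m hm => ?_
    rw [if_neg (hnP m (hsub hm)), nodeFactor_congr T π ρ (Y' := u)]
    · simp [hnP m (hsub hm)]
    · intro k hk
      have : k ∈ active T E := mem_active.2 (Or.inr ⟨m, hm, (mem_parents T).1 hk⟩)
      simp [hnP k this]
  have h2 : nodeFactor T π ρ (fun k => if k ∈ T.parents e then v k else u k) e =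
      nodeFactor T π ρ (Function.update v e (u e)) e := by
    refine nodeFactor_congr T π ρ ?_ ?_
    · simp [hnP e heA]
    · intro k hk
      have : k ≠ e := by
        rintro rfl
        exact not_mem_parents_self T _ hk
      simp [hk, this]
  have h3 : ∏ m ∈ (active T E \ E).erase e, b m (if m ∈ T.parents e then v m else u m) =
      ∏ m ∈ (active T E \ E).erase e, b m (u m) :=
    Finset.prod_congr rfl fun m hm => by rw [if_neg (Finset.disjoint_left.1 hdis hm)]
  have h4 : ∏ m ∈ T.parents e, b m (if m ∈ T.parents e then v m else u m) =
      ∏ m ∈ T.parents e, b m (v m) :=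
    Finset.prod_congr rfl fun m hm => by rw [if_pos hm]
  rw [h1, h2, h3, h4, if_neg (hnP e heA)]
  ring

lemma partialSum_eq_full {T : RevTree N} {π ρ : ℝ} {px b : Fin N → Fin 2 → ℝ}
    (hb : IsMsg T π ρ px b) (E : Finset (Fin N))
    (hE : ∀ m ∈ E, ∀ c, T.child m = some c → c ∈ E) :
    partialSum T π ρ px b E =
      ∑ Y : Fin N → Fin 2, (∏ m, px m (Y m)) * ∏ m, nodeFactor T π ρ Y m := by
  induction hk : Eᶜ.card using Nat.strong_induction_on generalizing E with
  | _ k ih =>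
    by_cases hu : E = Finset.univ
    · subst hu
      have hA : active T Finset.univ = Finset.univ :=
        Finset.univ_subset_iff.1 (subset_active hE)
      have hS : assignments (Finset.univ : Finset (Fin N)) = Finset.univ := by
        ext u; simp [mem_assignments]
      simp [partialSum, hA, hS, Finset.prod_mul_distrib]
    · -- A node outside `E` that is closest to the root is active.
      obtain ⟨e, he, hmin⟩ := (wf_child T).has_min {m | m ∉ E} (by
        by_contra h
        apply hu
        ext m
        by_contra hm
        exact h ⟨m, by simpa using hm⟩)
      have he' : e ∉ E := he
      have hc : ∀ c, T.child e = some c → c ∈ E := fun c hc => by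
        by_contra h
        exact hmin c h hc
      have heA : e ∈ active T E := by
        rw [mem_active]
        rcases h : T.child e with _ | c
        · exact Or.inl (T.root_unique e h)
        · exact Or.inr ⟨c, hc c h, rfl⟩
      rw [← partialSum_insert hb hE he' heA]
      refine ih _ ?_ (insert e E) ?_ rfl
      · rw [← hk]
        refine Finset.card_lt_card ?_
        rw [Finset.compl_ssubset_compl]
        exact Finset.ssubset_insert he'
      · intro m hm c h
        rcases Finset.mem_insert.1 hm with rfl | hm
        · exact Finset.mem_insert_of_mem (hc c h)
        · exact Finset.mem_insert_of_mem (hE m hm c h)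

/-- The root message, summed over its label, is the partition function. -/
lemma sum_full_eq_sum_msg_root {T : RevTree N} {π ρ : ℝ} {px b : Fin N → Fin 2 → ℝ}
    (hb : IsMsg T π ρ px b) :
    ∑ Y : Fin N → Fin 2, (∏ m, px m (Y m)) * ∏ m, nodeFactor T π ρ Y m =
      ∑ y : Fin 2, b T.root y := by
  rw [← partialSum_eq_full hb ∅ (by simp)]
  have hA : active T ∅ = {T.root} := by
    ext m; simp [mem_active]
  simp [partialSum, hA, sum_assignments_singleton, -Fin.sum_univ_two]

/-! ### The path from a node to the root -/

/-- Messages for two likelihoods that differ only at `n` agree at every node that is not on the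
path from `n` to the root. -/
lemma msg_congr {T : RevTree N} {π ρ : ℝ} {px px' b b' : Fin N → Fin 2 → ℝ}
    (hb : IsMsg T π ρ px b) (hb' : IsMsg T π ρ px' b') {n : Fin N}
    (hpx : ∀ m, m ≠ n → px' m = px m) (m : Fin N)
    (hm : ¬ Relation.ReflTransGen (fun a b => T.child a = some b) n m) :
    b' m = b m := by
  induction m using (wf_parent T).induction with
  | _ m ih =>
    funext y
    rw [hb m y, hb' m y, hpx m (by rintro rfl; exact hm Relation.ReflTransGen.refl)]
    congr 1
    refine Finset.sum_congr rfl fun v _ => ?_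
    congr 1
    refine Finset.prod_congr rfl fun k hk => ?_
    rw [mem_parents] at hk
    rw [ih k hk fun h => hm (h.tail hk)]

/-- The path from `n` to the root meets the parents of any node at most once. -/
lemma sibling_not_on_path {T : RevTree N} {n k s c : Fin N}
    (hk : T.child k = some c) (hs : T.child s = some c) (hne : s ≠ k)
    (hnk : Relation.ReflTransGen (fun a b => T.child a = some b) n k) :
    ¬ Relation.ReflTransGen (fun a b => T.child a = some b) n s := by
  intro hns
  have key : ∀ a b : Fin N, T.child a = some c → T.child b = some c → a ≠ b →
      ¬ Relation.ReflTransGen (fun a b => T.child a = some b) a b := by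
    intro a b ha hb hab h
    rcases Relation.ReflTransGen.cases_head h with h | ⟨d, hd, h⟩
    · exact hab h
    · rw [ha] at hd
      obtain rfl := Option.some.inj hd
      exact T.acyclic _ (Relation.TransGen.tail' h hb)
  rcases Relation.ReflTransGen.total_of_right_unique
    (fun a b c h h' => Option.some.inj (h.symm.trans h')) hnk hns with h | h
  · exact key k s hk hs (Ne.symm hne) h
  · exact key s k hs hk hne h

lemma sum_assignments_parents {T : RevTree N} {k c : Fin N} (hk : T.child k = some c)
    (F : (Fin N → Fin 2) → ℝ) :
    ∑ v ∈ assignments (T.parents c), F v =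
      ∑ y : Fin 2, ∑ u ∈ assignments (T.siblings k c),
        F (fun j => if j ∈ T.siblings k c then u j else Function.update (0 : Fin N → Fin 2) k y j) := by
  have hP : T.parents c = {k} ∪ T.siblings k c := by
    ext j
    simp only [RevTree.siblings, Finset.mem_union, Finset.mem_singleton, Finset.mem_sdiff]
    constructor
    · intro h
      by_cases hj : j = k
      · exact Or.inl hj
      · exact Or.inr ⟨h, hj⟩
    · rintro (rfl | h)
      · exact (mem_parents T).2 hk
      · exact h.1
  rw [hP, sum_assignments_union (by simp [RevTree.siblings]), sum_assignments_singleton]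

/-- A product over the parents of `c` splits off the factor of one parent `k`. -/
lemma prod_parents {M : Type*} [CommMonoid M] {T : RevTree N} {k c : Fin N}
    (hk : T.child k = some c) (F : Fin N → M) :
    ∏ j ∈ T.parents c, F j = F k * ∏ j ∈ T.siblings k c, F j := by
  rw [RevTree.siblings, Finset.sdiff_singleton_eq_erase,
    Finset.mul_prod_erase _ _ ((mem_parents T).2 hk)]

end HMT

/-! ### Node marginals -/

open HMT in
/-- The unnormalized identity `P(X, y_n = y) = f_n^i(y) g_n^i(y) P(x_n|y)`. -/
lemma marginal_eq_messages {N : ℕ} (T : RevTree N) (π ρ : ℝ) (px : Fin N → Fin 2 → ℝ)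
    (fi fo : Fin N → Fin 2 → ℝ)
    (hfiLeaf : ∀ n, T.IsLeaf n → ∀ y : Fin 2, fi n y = leafPrior π y)
    (hfiInt : ∀ n, ¬ T.IsLeaf n → ∀ y : Fin 2,
      fi n y = ∑ u ∈ assignments (T.parents n),
        transProb ρ (y : ℕ) (∏ k ∈ T.parents n, (u k : ℕ)) *
          ∏ k ∈ T.parents n, fo k (u k))
    (hfo : ∀ n y, fo n y = fi n y * px n y)
    (gi go : Fin N → Fin 2 → ℝ)
    (hgiRoot : ∀ y : Fin 2, gi T.root y = 1)
    (hgiInt : ∀ n c, T.child n = some c → ∀ y : Fin 2,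
      gi n y = ∑ yc : Fin 2, ∑ u ∈ assignments (T.siblings n c),
        go c yc * transProb ρ (yc : ℕ) ((y : ℕ) * ∏ k ∈ T.siblings n c, (u k : ℕ)) *
          ∏ k ∈ T.siblings n c, fo k (u k))
    (hgo : ∀ n y, go n y = gi n y * px n y) (n : Fin N) (y : Fin 2) :
    marginal T π ρ px Finset.univ {n} (fun _ => y) = fi n y * gi n y * px n y := by
  have hmsg : ∀ e z, fi e z = ∑ v ∈ assignments (T.parents e),
      nodeFactor T π ρ (Function.update v e z) e * ∏ k ∈ T.parents e, fo k (v k) := by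
    intro e z
    by_cases hl : T.IsLeaf e
    · have hP : T.parents e = ∅ := hl
      have hA : assignments (∅ : Finset (Fin N)) = {0} := by
        ext u
        simp [mem_assignments, funext_iff]
      rw [hfiLeaf e hl, hP, hA]
      simp [nodeFactor, hl]
    · rw [hfiInt e hl]
      refine Finset.sum_congr rfl fun v _ => ?_
      have : ∏ k ∈ T.parents e, ((Function.update v e z k : Fin 2) : ℕ) =
          ∏ k ∈ T.parents e, (v k : ℕ) := by
        refine Finset.prod_congr rfl fun k hk => ?_
        have : k ≠ e := by
          rintro rfl
          exact not_mem_parents_self T _ hk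
        rw [Function.update_of_ne this]
      simp [nodeFactor, hl, this]
  have hb : IsMsg T π ρ px fo := fun e z => by rw [hfo, ← hmsg, mul_comm]
  -- Likelihoods with the event `y_n = y` built in, and their messages.
  let px' : Fin N → Fin 2 → ℝ := fun m z => if m = n ∧ z ≠ y then 0 else px m z
  have hpx' : ∀ m, m ≠ n → px' m = px m := fun m hm => by
    funext z; simp [px', hm]
  obtain ⟨b', hb'⟩ := exists_isMsg T π ρ px'
  have hmarg : marginal T π ρ px Finset.univ {n} (fun _ => y) =
      ∑ Y : Fin N → Fin 2, (∏ m, px' m (Y m)) * ∏ m, nodeFactor T π ρ Y m := by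
    unfold marginal
    rw [Finset.sum_filter]
    refine Finset.sum_congr rfl fun Y _ => ?_
    by_cases hY : Y n = y
    · have : ∀ m, px' m (Y m) = px m (Y m) := fun m => by
        by_cases hm : m = n
        · subst hm; simp [px', hY]
        · rw [hpx' m hm]
      simp [hY, this]
    · have : ∏ m, px' m (Y m) = 0 :=
        Finset.prod_eq_zero (Finset.mem_univ n) (by simp [px', hY])
      simp [hY, this]
  have hoff := msg_congr hb hb' hpx'
  have hn : ∀ z, b' n z = px' n z * fi n z := by
    intro z
    rw [hb' n z, hmsg n z]
    congr 1
    refine Finset.sum_congr rfl fun v _ => ?_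
    congr 1
    refine Finset.prod_congr rfl fun k hk => ?_
    rw [hoff k fun h => T.acyclic n (Relation.TransGen.tail' h ((mem_parents T).1 hk))]
  have hstep : ∀ k c, Relation.ReflTransGen (fun a b => T.child a = some b) n k →
      T.child k = some c → ∑ z, b' c z * gi c z = ∑ z, b' k z * gi k z := by
    intro k c hnk hk
    have hcn : c ≠ n := by
      rintro rfl
      exact T.acyclic _ (Relation.TransGen.tail' hnk hk)
    have hleaf : ¬ T.IsLeaf c := fun h => by
      have : k ∈ T.parents c := (mem_parents T).2 hk
      rw [show T.parents c = ∅ from h] at this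
      simp at this
    have hks : k ∉ T.siblings k c := by simp [RevTree.siblings]
    -- The recursion for `b' c`, with the label of the parent `k` on the path split off.
    have hc : ∀ z, b' c z = px c z * ∑ w : Fin 2, ∑ u ∈ assignments (T.siblings k c),
        transProb ρ (z : ℕ) ((w : ℕ) * ∏ j ∈ T.siblings k c, (u j : ℕ)) *
          (b' k w * ∏ j ∈ T.siblings k c, fo j (u j)) := by
      intro z
      rw [hb' c z, hpx' c hcn, sum_assignments_parents hk]
      congr 1
      refine Finset.sum_congr rfl fun w _ => Finset.sum_congr rfl fun u _ => ?_
      generalize hv : (fun j => if j ∈ T.siblings k c then u j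
        else Function.update (0 : Fin N → Fin 2) k w j) = v
      have hvk : v k = w := by simp [← hv, hks]
      have hvs : ∀ j ∈ T.siblings k c, v j = u j := fun j hj => by simp [← hv, hj]
      have hne : ∀ j ∈ T.parents c, j ≠ c := by
        rintro j hj rfl
        exact not_mem_parents_self T _ hj
      have h1 : ∏ j ∈ T.parents c, ((Function.update v c z j : Fin 2) : ℕ) =
          (w : ℕ) * ∏ j ∈ T.siblings k c, (u j : ℕ) := by
        rw [prod_parents hk, Function.update_of_ne (hne k ((mem_parents T).2 hk)), hvk]
        congr 1
        refine Finset.prod_congr rfl fun j hj => ?_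
        rw [Function.update_of_ne (hne j (Finset.mem_sdiff.1 hj).1), hvs j hj]
      have h2 : ∏ j ∈ T.parents c, b' j (v j) =
          b' k w * ∏ j ∈ T.siblings k c, fo j (u j) := by
        rw [prod_parents hk, hvk]
        congr 1
        refine Finset.prod_congr rfl fun j hj => ?_
        have hj' := Finset.mem_sdiff.1 hj
        rw [hvs j hj, hoff j (sibling_not_on_path hk ((mem_parents T).1 hj'.1)
          (by simpa using hj'.2) hnk)]
      rw [nodeFactor, if_neg hleaf, h1, h2, Function.update_self]
    simp only [hc, hgiInt k c hk, hgo, Finset.mul_sum, Finset.sum_mul]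
    rw [Finset.sum_comm]
    refine Finset.sum_congr rfl fun w _ => Finset.sum_congr rfl fun z _ =>
      Finset.sum_congr rfl fun u _ => ?_
    ring
  have hpath : ∀ m, Relation.ReflTransGen (fun a b => T.child a = some b) n m →
      ∑ z, b' m z * gi m z = ∑ z, b' n z * gi n z := by
    intro m hm
    induction hm with
    | refl => rfl
    | tail h h' ih => rw [hstep _ _ h h', ih]
  have hroot : ∀ m, Relation.ReflTransGen (fun a b => T.child a = some b) m T.root := by
    intro m
    induction m using (wf_child T).induction with
    | _ m ih =>
      rcases h : T.child m with _ | c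
      · rw [T.root_unique m h]
      · exact Relation.ReflTransGen.head h (ih c h)
  rw [hmarg, sum_full_eq_sum_msg_root hb']
  have := hpath T.root (hroot n)
  simp only [hgiRoot, mul_one] at this
  rw [this, Finset.sum_eq_single y]
  · rw [hn]
    simp only [px', ne_eq, not_true_eq_false, and_false, if_false]
    ring
  · intro z _ hz
    rw [hn]
    simp [px', hz]
  · simp

/-- Theorem 1, part 2: when `P(X) > 0`, the normalized quantity
`P′(y_n) / Σ_{y'} P′(y')` equals the posterior marginal `P(y_n|X) = P(X,y_n)/P(X)`. -/
theorem normalized_node_marginal_eq_posterior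
{N : ℕ} (T : RevTree N) (π ρ : ℝ)
    (hπ : π ∈ Set.Ioo (0 : ℝ) 1) (hρ : ρ ∈ Set.Ioo (0 : ℝ) 1)
    (px : Fin N → Fin 2 → ℝ) (hpx : ∀ n y, 0 ≤ px n y)
(fi fo : Fin N → Fin 2 → ℝ)
    (hfiLeaf : ∀ n, T.IsLeaf n → ∀ y : Fin 2, fi n y = leafPrior π y)
    (hfiInt : ∀ n, ¬ T.IsLeaf n → ∀ y : Fin 2,
      fi n y = ∑ u ∈ assignments (T.parents n),
        transProb ρ (y : ℕ) (∏ k ∈ T.parents n, (u k : ℕ)) *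
          ∏ k ∈ T.parents n, fo k (u k))
    (hfo : ∀ n y, fo n y = fi n y * px n y)
(gi go : Fin N → Fin 2 → ℝ)
    (hgiRoot : ∀ y : Fin 2, gi T.root y = 1)
    (hgiInt : ∀ n c, T.child n = some c → ∀ y : Fin 2,
      gi n y = ∑ yc : Fin 2, ∑ u ∈ assignments (T.siblings n c),
        go c yc * transProb ρ (yc : ℕ) ((y : ℕ) * ∏ k ∈ T.siblings n c, (u k : ℕ)) *
          ∏ k ∈ T.siblings n c, fo k (u k))
    (hgo : ∀ n y, go n y = gi n y * px n y)
    (hPX : 0 < ∑ Y : Fin N → Fin 2,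
      (∏ m, px m (Y m)) * ∏ m, nodeFactor T π ρ Y m) :
    ∀ (n : Fin N) (y : Fin 2),
      (fi n y * gi n y * px n y) /
          (∑ y' : Fin 2, fi n y' * gi n y' * px n y') =
        marginal T π ρ px Finset.univ {n} (fun _ => y) /
          (∑ Y : Fin N → Fin 2,
            (∏ m, px m (Y m)) * ∏ m, nodeFactor T π ρ Y m) := by
  intro n y
  have key := marginal_eq_messages T π ρ px fi fo hfiLeaf hfiInt hfo gi go hgiRoot hgiInt hgo n
  have hsum : ∑ y' : Fin 2, fi n y' * gi n y' * px n y' =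
      ∑ Y : Fin N → Fin 2, (∏ m, px m (Y m)) * ∏ m, nodeFactor T π ρ Y m := by
    simp only [← key, marginal, Finset.mem_singleton, forall_eq]
    exact Finset.sum_fiberwise _ (fun Y : Fin N → Fin 2 => Y n) _
  rw [hsum, key]
end

section
/- (Theorem 1, part 4) In a hidden Markov tree with strictly positive data likelihood P(X) > 0, for every non-leaf node n the normalized quantity P′(y_n, y_{k∈P_n}) / Σ_{y_n', y_{k∈P_n}'} P′(y_n', y_{k∈P_n}'), where P′(y_n, y_{k∈P_n}) = [∏_{k∈P_n} f_k^o(y_k)] · g_n^o(y_n) · P(y_n | y_{k∈P_n}), equals the joint posterior distribution P(y_n, y_{k∈P_n} | X) = P(X, y_n, y_{k∈P_n}) / P(X) of the labels of node n and its parents given all observed features. -/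
/-!
The quantity `P′(y_n, y_{P_n})` is proportional to the marginal `P(X, y_n, y_{P_n})`, with a
constant that depends on the node only, and the marginals sum to `P(X)`; normalizing gives the
claim.

Proportionality is variable elimination along the tree. `Elim A f g` says that summing out the
labels in `A` turns `f` into `g`, expressed by testing against functions that ignore `A`; working
up to a positive constant avoids restricting labelings to subsets of nodes. Such eliminations
compose, may be multiplied by factors ignoring `A`, and may be performed side by side on disjoint
parts of the tree (`Elim.prod`). Since the trees above the parents of a node are disjoint
(`RevTree.disjoint_tree`), induction from the leaves shows that `f^o_n` is what remains of the
weight of the tree above `n` (`elim_forward`), and induction from the root shows that `g^o_n` is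
what remains of everything else together with the feature likelihood of `n` (`elim_backward`).
Splitting the nodes into `n`, the trees above its parents, and the complement of the tree above `n`
then gives `elim_family`, and testing against the indicator of a labeling of `n` and its parents
yields the proportionality.
-/

open Finset

/-! ### Summing out labels -/

/-- `φ` does not depend on the labels of the nodes in `A`. -/
def Indep {N : ℕ} (A : Finset (Fin N)) (φ : (Fin N → Fin 2) → ℝ) : Prop :=
  ∀ Y₁ Y₂ : Fin N → Fin 2, (∀ m ∉ A, Y₁ m = Y₂ m) → φ Y₁ = φ Y₂

/-- Summing out the labels in `A` turns `f` into `g` up to a positive constant: `f` and `g` have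
proportional integrals (for the counting measure on labelings) against every test function that
does not depend on the labels in `A`. -/
def Elim {N : ℕ} (A : Finset (Fin N)) (f g : (Fin N → Fin 2) → ℝ) : Prop :=
  ∃ C : ℝ, 0 < C ∧ ∀ φ, Indep A φ → ∑ Y, φ Y * f Y = C * ∑ Y, φ Y * g Y

section Elimination

variable {N : ℕ} {A B : Finset (Fin N)} {f g h : (Fin N → Fin 2) → ℝ}

lemma Indep.mono (hAB : A ⊆ B) (hf : Indep B f) : Indep A f :=
  fun Y Y' e => hf Y Y' fun m hm => e m fun hA => hm (hAB hA)

lemma Indep.mul (hf : Indep A f) (hg : Indep A g) : Indep A (fun Y => f Y * g Y) :=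
  fun Y Y' e => by simp only [hf Y Y' e, hg Y Y' e]

lemma Indep.prod {ι : Type*} (S : Finset ι) {F : ι → (Fin N → Fin 2) → ℝ}
    (hF : ∀ i ∈ S, Indep A (F i)) : Indep A (fun Y => ∏ i ∈ S, F i Y) :=
  fun Y Y' e => Finset.prod_congr rfl fun i hi => hF i hi Y Y' e

lemma Indep.coord {a : Fin N} (ha : a ∉ A) (F : Fin 2 → ℝ) : Indep A (fun Y => F (Y a)) :=
  fun Y Y' e => by simp only [e a ha]

lemma Elim.refl (A : Finset (Fin N)) (f : (Fin N → Fin 2) → ℝ) : Elim A f f :=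
  ⟨1, one_pos, fun φ _ => by simp⟩

lemma Elim.trans (h1 : Elim A f g) (h2 : Elim A g h) : Elim A f h := by
  obtain ⟨C, hC, h1⟩ := h1
  obtain ⟨D, hD, h2⟩ := h2
  exact ⟨C * D, mul_pos hC hD, fun φ hφ => by rw [h1 φ hφ, h2 φ hφ, mul_assoc]⟩

lemma Elim.mono (hAB : A ⊆ B) (h1 : Elim A f g) : Elim B f g := by
  obtain ⟨C, hC, h1⟩ := h1
  exact ⟨C, hC, fun φ hφ => h1 φ (hφ.mono hAB)⟩

lemma Elim.mul_left (hh : Indep A h) (h1 : Elim A f g) :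
    Elim A (fun Y => h Y * f Y) (fun Y => h Y * g Y) := by
  obtain ⟨C, hC, h1⟩ := h1
  refine ⟨C, hC, fun φ hφ => ?_⟩
  simpa only [mul_assoc] using h1 _ (hφ.mul hh)

/-- Eliminations supported on separate parts of the tree can be carried out inside a product. -/
lemma Elim.prod (S : Finset (Fin N)) (A : Fin N → Finset (Fin N))
    (F G : Fin N → (Fin N → Fin 2) → ℝ)
    (hFG : ∀ k ∈ S, Elim (A k) (F k) (G k))
    (hF : ∀ j ∈ S, ∀ k ∈ S, j ≠ k → Indep (A k) (F j))
    (hG : ∀ j ∈ S, ∀ k ∈ S, j ≠ k → Indep (A k) (G j))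
    (h : (Fin N → Fin 2) → ℝ) (hh : ∀ k ∈ S, Indep (A k) h) :
    Elim (S.biUnion A) (fun Y => h Y * ∏ k ∈ S, F k Y) (fun Y => h Y * ∏ k ∈ S, G k Y) := by
  induction S using Finset.induction_on generalizing h with
  | empty => exact Elim.refl _ _
  | insert a S ha ih =>
    have hne : ∀ k ∈ S, a ≠ k := fun k hk e => ha (e ▸ hk)
    have e1 := ih (fun k hk => hFG k (mem_insert_of_mem hk))
      (fun j hj k hk => hF j (mem_insert_of_mem hj) k (mem_insert_of_mem hk))
      (fun j hj k hk => hG j (mem_insert_of_mem hj) k (mem_insert_of_mem hk))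
      (fun Y => h Y * F a Y)
      (fun k hk => (hh k (mem_insert_of_mem hk)).mul
        (hF a (mem_insert_self _ _) k (mem_insert_of_mem hk) (hne k hk)))
    have e2 := Elim.mul_left (h := fun Y => h Y * ∏ k ∈ S, G k Y)
      ((hh a (mem_insert_self _ _)).mul (Indep.prod S fun k hk =>
        hG k (mem_insert_of_mem hk) a (mem_insert_self _ _) (hne k hk).symm))
      (hFG a (mem_insert_self _ _))
    rw [biUnion_insert]
    have e3 := (e1.mono (subset_union_right (s₁ := A a))).trans
      (h := fun Y => (h Y * ∏ k ∈ S, G k Y) * G a Y) (by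
        convert e2.mono (subset_union_left (s₂ := S.biUnion A)) using 2
        ring)
    convert e3 using 2
    · rw [prod_insert ha]; ring
    · rw [prod_insert ha]; ring

/-- Summing out the labels in `A` literally. The constant is `1 / #(assignments A)`: the map
exchanging the labels of `u` and `Y` on `A` is an involution of
`assignments A × (Fin N → Fin 2)`. -/
lemma Elim.sum (A : Finset (Fin N)) (f : (Fin N → Fin 2) → ℝ) :
    Elim A f (fun Y => ∑ u ∈ assignments A, f (A.piecewise u Y)) := by
  have hcard : 0 < ((assignments A).card : ℝ) := by
    have : (fun _ => 0) ∈ assignments A := by simp [assignments]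
    exact_mod_cast card_pos.2 ⟨_, this⟩
  refine ⟨_, inv_pos.2 hcard, fun φ hφ => ?_⟩
  rw [eq_inv_mul_iff_mul_eq₀ hcard.ne', ← nsmul_eq_mul, ← sum_const]
  simp_rw [mul_sum]
  conv_rhs => rw [sum_comm]
  rw [← sum_product', ← sum_product']
  have key : ∀ p : (Fin N → Fin 2) × (Fin N → Fin 2), p ∈ assignments A ×ˢ univ →
      ((A.piecewise p.2 (fun _ => 0) : Fin N → Fin 2), A.piecewise p.1 p.2) ∈
        assignments A ×ˢ (univ : Finset (Fin N → Fin 2)) := by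
    intro p _
    simp +contextual [assignments]
  have inv : ∀ p : (Fin N → Fin 2) × (Fin N → Fin 2), p ∈ assignments A ×ˢ univ →
      ((A.piecewise (A.piecewise p.1 p.2) (fun _ => 0) : Fin N → Fin 2),
        A.piecewise (A.piecewise p.2 (fun _ => 0) : Fin N → Fin 2) (A.piecewise p.1 p.2)) = p := by
    rintro ⟨u, Y⟩ hp
    simp only [assignments, mem_product, mem_filter, mem_univ, true_and, and_true] at hp
    ext m : 2
    · by_cases hm : m ∈ A <;> simp [hm, hp]
    · by_cases hm : m ∈ A <;> simp [hm]
  refine sum_nbij' (fun p => (A.piecewise p.2 (fun _ => 0), A.piecewise p.1 p.2))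
    (fun p => (A.piecewise p.2 (fun _ => 0), A.piecewise p.1 p.2)) key key inv inv ?_
  rintro ⟨u, Y⟩ hp
  have e : A.piecewise (A.piecewise Y (fun _ => 0) : Fin N → Fin 2) (A.piecewise u Y) = Y := by
    ext m : 1
    by_cases hm : m ∈ A <;> simp [hm]
  simp only [e]
  congr 1
  exact hφ _ _ fun m hm => by simp [hm]

lemma sum_assignments_singleton (c : Fin N) (F : Fin 2 → ℝ) :
    ∑ u ∈ assignments {c}, F (u c) = ∑ y, F y := by
  refine sum_nbij' (fun u => u c) (fun y => Function.update (fun _ => 0) c y) ?_ ?_ ?_ ?_ ?_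
  · simp
  · intro y _
    simp +contextual [assignments]
  · intro u hu
    ext m : 1
    by_cases hm : m = c
    · subst hm; simp
    · simp only [assignments, mem_filter, mem_univ, true_and, mem_singleton] at hu
      simp [hm, hu m hm]
  · simp
  · simp

/-- The number of labelings with prescribed labels on `A` does not depend on the prescription. -/
lemma card_agree (A : Finset (Fin N)) (σ : Fin N → Fin 2) :
    (univ.filter fun Y : Fin N → Fin 2 => ∀ t ∈ A, Y t = σ t).card =
      ∏ t : Fin N, if t ∈ A then 1 else 2 := by
  have : (univ.filter fun Y : Fin N → Fin 2 => ∀ t ∈ A, Y t = σ t) =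
      Fintype.piFinset fun t => if t ∈ A then {σ t} else univ := by
    ext Y
    simp only [mem_filter, mem_univ, true_and, Fintype.mem_piFinset]
    refine forall_congr' fun t => ?_
    by_cases ht : t ∈ A <;> simp [ht]
  rw [this, Fintype.card_piFinset]
  refine prod_congr rfl fun t _ => ?_
  by_cases ht : t ∈ A <;> simp [ht]

end Elimination

/-! ### Combinatorics of reverse trees -/

namespace RevTree

variable {N : ℕ} (T : RevTree N)

lemma mem_parents {k n : Fin N} : k ∈ T.parents n ↔ T.child k = some n := by
  simp [parents]

lemma mem_tree {m n : Fin N} :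
    m ∈ T.tree n ↔ Relation.ReflTransGen (fun a b => T.child a = some b) m n := by
  simp [tree]

lemma self_mem_tree (n : Fin N) : n ∈ T.tree n := T.mem_tree.2 .refl

lemma mem_tree_iff {m n : Fin N} : m ∈ T.tree n ↔ m = n ∨ ∃ k ∈ T.parents n, m ∈ T.tree k := by
  simp only [mem_tree, mem_parents]
  rw [Relation.ReflTransGen.cases_tail_iff]
  exact or_congr eq_comm ⟨fun ⟨k, a, b⟩ => ⟨k, b, a⟩, fun ⟨k, a, b⟩ => ⟨k, b, a⟩⟩

lemma tree_subset {k n : Fin N} (hk : k ∈ T.tree n) : T.tree k ⊆ T.tree n :=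
  fun _ hm => T.mem_tree.2 ((T.mem_tree.1 hm).trans (T.mem_tree.1 hk))

lemma parent_mem_tree {k n : Fin N} (hk : k ∈ T.parents n) : k ∈ T.tree n :=
  T.mem_tree.2 (.single (T.mem_parents.1 hk))

lemma notMem_tree_parent {k n : Fin N} (hk : k ∈ T.parents n) : n ∉ T.tree k := fun h =>
  T.acyclic n (.tail' (T.mem_tree.1 h) (T.mem_parents.1 hk))

lemma notMem_parents_self (n : Fin N) : n ∉ T.parents n := fun h =>
  T.notMem_tree_parent h (T.self_mem_tree n)

/-- Distinct parents of a node have disjoint trees: the downstream path of a common element would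
visit both, and hence close a cycle. -/
lemma disjoint_tree {j k n : Fin N} (hj : j ∈ T.parents n) (hk : k ∈ T.parents n) (hjk : j ≠ k) :
    Disjoint (T.tree j) (T.tree k) := by
  have aux : ∀ {j k}, j ∈ T.parents n → k ∈ T.parents n → j ≠ k →
      ¬ Relation.ReflTransGen (fun a b => T.child a = some b) j k := by
    intro j k hj hk hjk h
    rcases h.cases_head with h | ⟨c, hc, h⟩
    · exact hjk h
    · rw [T.mem_parents.1 hj, Option.some_inj] at hc
      subst hc
      exact T.notMem_tree_parent hk (T.mem_tree.2 h)
  refine disjoint_left.2 fun m hmj hmk => ?_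
  rcases Relation.ReflTransGen.total_of_right_unique (r := fun a b => T.child a = some b)
    (fun a b c (h1 : _ = _) (h2 : _ = _) => Option.some_inj.1 (h1.symm.trans h2))
    (T.mem_tree.1 hmj) (T.mem_tree.1 hmk) with h | h
  · exact aux hj hk hjk h
  · exact aux hk hj hjk.symm h

lemma wf_child : WellFounded fun a b => T.child a = some b := by
  have : Std.Irrefl (Relation.TransGen fun a b => T.child a = some b) := ⟨T.acyclic⟩
  exact Subrelation.wf (r := Relation.TransGen fun a b => T.child a = some b) (.single ·)
    (Finite.wellFounded_of_trans_of_irrefl _)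

lemma wf_parent : WellFounded fun a b => T.child b = some a := by
  have : Std.Irrefl (Relation.TransGen fun a b => T.child b = some a) := ⟨fun n h =>
    T.acyclic n (Relation.transGen_swap.1 h)⟩
  exact Subrelation.wf (r := Relation.TransGen fun a b => T.child b = some a) (.single ·)
    (Finite.wellFounded_of_trans_of_irrefl _)

lemma mem_tree_root (n : Fin N) : n ∈ T.tree T.root := by
  induction n using T.wf_parent.induction with
  | _ n ih =>
    rcases h : T.child n with _ | c
    · rw [T.root_unique n h]; exact T.self_mem_tree _
    · exact T.mem_tree.2 (.head h (T.mem_tree.1 (ih c h)))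

lemma mem_pre {m n : Fin N} : m ∈ T.pre n ↔ m ∉ T.tree n := by simp [pre]

lemma mem_siblings {k n c : Fin N} : k ∈ T.siblings n c ↔ k ∈ T.parents c ∧ k ≠ n := by
  simp [siblings]

lemma tree_eq (n : Fin N) : T.tree n = insert n ((T.parents n).biUnion T.tree) := by
  ext m
  rw [mem_tree_iff]
  simp

lemma prod_tree (n : Fin N) (ψ : Fin N → ℝ) :
    ∏ m ∈ T.tree n, ψ m = ψ n * ∏ k ∈ T.parents n, ∏ m ∈ T.tree k, ψ m := by
  rw [tree_eq, prod_insert, prod_biUnion]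
  · exact fun j hj k hk hjk => T.disjoint_tree hj hk hjk
  · simp only [mem_biUnion, not_exists, not_and]
    exact fun k hk => T.notMem_tree_parent hk

lemma prod_univ_eq (n : Fin N) (ψ : Fin N → ℝ) :
    ∏ m, ψ m = (∏ m ∈ T.pre n, ψ m) * ∏ m ∈ T.tree n, ψ m :=
  (prod_sdiff (subset_univ _)).symm

lemma prod_pre {n c : Fin N} (hc : T.child n = some c) (ψ : Fin N → ℝ) :
    ∏ m ∈ T.pre n, ψ m =
      (∏ m ∈ T.pre c, ψ m) * (ψ c * ∏ k ∈ T.siblings n c, ∏ m ∈ T.tree k, ψ m) := by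
  have hn : n ∈ T.parents c := T.mem_parents.2 hc
  have e : T.pre n = T.pre c ∪ insert c ((T.siblings n c).biUnion T.tree) := by
    ext m
    simp only [mem_pre, mem_union, mem_insert, mem_biUnion, mem_siblings]
    constructor
    · intro hm
      by_cases hmc : m ∈ T.tree c
      · rcases T.mem_tree_iff.1 hmc with h | ⟨k, hk, h⟩
        · exact .inr (.inl h)
        · exact .inr (.inr ⟨k, ⟨hk, fun e => hm (e ▸ h)⟩, h⟩)
      · exact .inl hmc
    · rintro (h | rfl | ⟨k, ⟨hk, hkn⟩, h⟩) hm
      · exact h (T.tree_subset (T.parent_mem_tree hn) hm)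
      · exact T.notMem_tree_parent hn hm
      · exact disjoint_left.1 (T.disjoint_tree hk hn hkn) h hm
  rw [e, prod_union, prod_insert, prod_biUnion]
  · exact fun j hj k hk hjk =>
      T.disjoint_tree (T.mem_siblings.1 hj).1 (T.mem_siblings.1 hk).1 hjk
  · simp only [mem_biUnion, not_exists, not_and, mem_siblings]
    exact fun k hk => T.notMem_tree_parent hk.1
  · rw [disjoint_left]
    intro m hm
    simp only [mem_insert, mem_biUnion, mem_siblings, not_or, not_exists, not_and]
    rw [mem_pre, mem_tree_iff] at hm
    push Not at hm
    exact ⟨hm.1, fun k hk => hm.2 k hk.1⟩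

end RevTree

/-! ### Message passing -/

section Weights

variable {N : ℕ} (T : RevTree N) (π ρ : ℝ) (px : Fin N → Fin 2 → ℝ)

/-- The local weight of node `m`: feature likelihood times class factor. -/
noncomputable def localWeight (m : Fin N) (Y : Fin N → Fin 2) : ℝ :=
  px m (Y m) * nodeFactor T π ρ Y m

variable {A : Finset (Fin N)}

lemma indep_nodeFactor {m : Fin N} (hm : m ∉ A) (hp : Disjoint (T.parents m) A) :
    Indep A (fun Y => nodeFactor T π ρ Y m) := by
  intro Y Y' e
  have : ∏ k ∈ T.parents m, (Y k : ℕ) = ∏ k ∈ T.parents m, (Y' k : ℕ) :=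
    prod_congr rfl fun k hk => by rw [e k (disjoint_left.1 hp hk)]
  simp only [nodeFactor, e m hm, this]

lemma indep_localWeight {m : Fin N} (hm : m ∉ A) (hp : Disjoint (T.parents m) A) :
    Indep A (localWeight T π ρ px m) :=
  (Indep.coord hm (px m)).mul (indep_nodeFactor T π ρ hm hp)

lemma indep_tree {n : Fin N} (h : Disjoint (T.tree n) A) :
    Indep A (fun Y => ∏ m ∈ T.tree n, localWeight T π ρ px m Y) :=
  Indep.prod _ fun _ hm => indep_localWeight T π ρ px (disjoint_left.1 h hm)
    (disjoint_left.2 fun _ hk => disjoint_left.1 h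
      (T.tree_subset hm (T.parent_mem_tree hk)))

lemma subtree_subset (n : Fin N) : T.subtree n ⊆ T.tree n := sdiff_subset

lemma mem_subtree {m n : Fin N} : m ∈ T.subtree n ↔ ∃ k ∈ T.parents n, m ∈ T.tree k := by
  simp only [RevTree.subtree, mem_sdiff, mem_singleton]
  rw [T.mem_tree_iff]
  constructor
  · rintro ⟨h | h, hn⟩
    · exact absurd h hn
    · exact h
  · rintro ⟨k, hk, h⟩
    exact ⟨.inr ⟨k, hk, h⟩, fun e => T.notMem_tree_parent hk (e ▸ h)⟩

variable {π ρ px} {fi fo : Fin N → Fin 2 → ℝ}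

/-- Simultaneous elimination of the strict subtrees of a set `S` of parents of a common node. -/
lemma elim_parents {c : Fin N} (S : Finset (Fin N)) (hS : S ⊆ T.parents c)
    (hF : ∀ k ∈ S, Elim (T.subtree k)
      (fun Y => ∏ m ∈ T.tree k, localWeight T π ρ px m Y) (fun Y => fo k (Y k)))
    (h : (Fin N → Fin 2) → ℝ) (hh : ∀ k ∈ S, Indep (T.subtree k) h) :
    Elim (S.biUnion T.subtree)
      (fun Y => h Y * ∏ k ∈ S, ∏ m ∈ T.tree k, localWeight T π ρ px m Y)
      (fun Y => h Y * ∏ k ∈ S, fo k (Y k)) := by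
  have hd : ∀ j ∈ S, ∀ k ∈ S, j ≠ k → Disjoint (T.tree j) (T.subtree k) := fun j hj k hk hjk =>
    (T.disjoint_tree (hS hj) (hS hk) hjk).mono_right (subtree_subset T k)
  exact Elim.prod S T.subtree (fun k Y => ∏ m ∈ T.tree k, localWeight T π ρ px m Y)
    (fun k Y => fo k (Y k)) hF (fun j hj k hk hjk => indep_tree T π ρ px (hd j hj k hk hjk))
    (fun j hj k hk hjk => Indep.coord (disjoint_left.1 (hd j hj k hk hjk) (T.self_mem_tree j)) _)
    h hh

lemma indep_nodeFactor_subtree {c k : Fin N} (hk : k ∈ T.parents c) :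
    Indep (T.subtree k) (fun Y => nodeFactor T π ρ Y c) := by
  refine indep_nodeFactor T π ρ
    (fun h => T.notMem_tree_parent hk (subtree_subset T k h)) (disjoint_left.2 fun j hj h => ?_)
  by_cases hjk : j = k
  · subst hjk
    simp [RevTree.subtree] at h
  · exact disjoint_left.1 (T.disjoint_tree hj hk hjk) (T.self_mem_tree j) (subtree_subset T k h)

/-- Meaning of the forward message: `fo n` results from the weight of the tree above `n` by summing
out all labels other than that of `n`. -/
lemma elim_forward
    (hfiLeaf : ∀ n, T.IsLeaf n → ∀ y : Fin 2, fi n y = leafPrior π y)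
    (hfiInt : ∀ n, ¬ T.IsLeaf n → ∀ y : Fin 2,
      fi n y = ∑ u ∈ assignments (T.parents n),
        transProb ρ (y : ℕ) (∏ k ∈ T.parents n, (u k : ℕ)) *
          ∏ k ∈ T.parents n, fo k (u k))
    (hfo : ∀ n y, fo n y = fi n y * px n y) (n : Fin N) :
    Elim (T.subtree n) (fun Y => ∏ m ∈ T.tree n, localWeight T π ρ px m Y)
      (fun Y => fo n (Y n)) := by
  induction n using T.wf_child.induction with
  | _ n ih =>
    simp_rw [T.prod_tree n]
    by_cases hl : T.IsLeaf n
    · convert Elim.refl (T.subtree n) (fun Y => fo n (Y n)) using 2 with Y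
      have : T.parents n = ∅ := hl
      simp [this, localWeight, nodeFactor, hl, hfo, hfiLeaf n hl, mul_comm]
    have s1 := elim_parents T (T.parents n) subset_rfl (fun k hk => ih k (T.mem_parents.1 hk))
      (localWeight T π ρ px n) fun k hk =>
        (Indep.coord (fun h => T.notMem_tree_parent hk (subtree_subset T k h)) (px n)).mul
          (indep_nodeFactor_subtree T hk)
    have s2 := Elim.sum (T.parents n)
      (fun Y => localWeight T π ρ px n Y * ∏ k ∈ T.parents n, fo k (Y k))
    refine (s1.mono ?_).trans ((s2.mono ?_).trans ?_)
    · intro m hm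
      obtain ⟨k, hk, hm⟩ := mem_biUnion.1 hm
      exact (mem_subtree T).2 ⟨k, hk, subtree_subset T k hm⟩
    · exact fun k hk => (mem_subtree T).2 ⟨k, hk, T.self_mem_tree k⟩
    · convert Elim.refl (T.subtree n) (fun Y => fo n (Y n)) using 2 with Y
      rw [hfo, hfiInt n hl, sum_mul]
      refine sum_congr rfl fun u _ => ?_
      have e1 : ∏ k ∈ T.parents n, (((T.parents n).piecewise u Y k : Fin 2) : ℕ) =
          ∏ k ∈ T.parents n, (u k : ℕ) := prod_congr rfl fun k hk => by simp [hk]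
      have e2 : ∏ k ∈ T.parents n, fo k ((T.parents n).piecewise u Y k) =
          ∏ k ∈ T.parents n, fo k (u k) := prod_congr rfl fun k hk => by simp [hk]
      simp only [localWeight, nodeFactor, hl, if_false, e1, e2,
        piecewise_eq_of_notMem _ _ _ (T.notMem_parents_self n)]
      ring

variable {gi go : Fin N → Fin 2 → ℝ}

/-- Meaning of the backward message: `go n` results from summing out all labels outside the tree
above `n` in the product of the local weights there and the feature likelihood of `n`. -/
lemma elim_backward
    (hF : ∀ n, Elim (T.subtree n) (fun Y => ∏ m ∈ T.tree n, localWeight T π ρ px m Y)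
      (fun Y => fo n (Y n)))
    (hgiRoot : ∀ y : Fin 2, gi T.root y = 1)
    (hgiInt : ∀ n c, T.child n = some c → ∀ y : Fin 2,
      gi n y = ∑ yc : Fin 2, ∑ u ∈ assignments (T.siblings n c),
        go c yc * transProb ρ (yc : ℕ) ((y : ℕ) * ∏ k ∈ T.siblings n c, (u k : ℕ)) *
          ∏ k ∈ T.siblings n c, fo k (u k))
    (hgo : ∀ n y, go n y = gi n y * px n y) (n : Fin N) :
    Elim (T.pre n) (fun Y => px n (Y n) * ∏ m ∈ T.pre n, localWeight T π ρ px m Y)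
      (fun Y => go n (Y n)) := by
  induction n using T.wf_parent.induction with
  | _ n ih =>
    rcases hc : T.child n with _ | c
    · obtain rfl := T.root_unique n hc
      have : T.pre T.root = ∅ := by
        ext m
        simp [T.mem_pre, T.mem_tree_root m]
      convert Elim.refl (T.pre T.root) (fun Y => go T.root (Y T.root)) using 2 with Y
      simp [this, hgo, hgiRoot]
    have hn : n ∈ T.parents c := T.mem_parents.2 hc
    have hcl : ¬ T.IsLeaf c := fun h => by
      rw [show T.parents c = ∅ from h] at hn
      exact notMem_empty _ hn
    have hSP : T.siblings n c ⊆ T.parents c := fun k hk => (T.mem_siblings.1 hk).1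
    have hnS : n ∉ T.siblings n c := fun h => (T.mem_siblings.1 h).2 rfl
    have hcS : c ∉ T.siblings n c := fun h => T.notMem_parents_self c (hSP h)
    have hnc : n ≠ c := fun e => T.notMem_parents_self c (e ▸ hn)
    have hpre : ∀ m ∈ T.tree c, m ∉ T.pre c := fun m hm h => T.mem_pre.1 h hm
    have hdisj : ∀ k ∈ T.parents c, Disjoint (T.tree k) (T.pre c) := fun k hk =>
      disjoint_left.2 fun m hm => hpre m (T.tree_subset (T.parent_mem_tree hk) hm)
    -- Sum out everything outside the tree above `c`.
    have s1 := Elim.mul_left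
      (h := fun Y => px n (Y n) * nodeFactor T π ρ Y c *
        ∏ k ∈ T.siblings n c, ∏ m ∈ T.tree k, localWeight T π ρ px m Y)
      (((Indep.coord (hpre n (T.parent_mem_tree hn)) (px n)).mul
        (indep_nodeFactor T π ρ (hpre c (T.self_mem_tree c))
          (disjoint_left.2 fun k hk => hpre k (T.parent_mem_tree hk)))).mul
        (Indep.prod _ fun k hk => indep_tree T π ρ px (hdisj k (hSP hk))))
      (ih c hc)
    -- Sum out the strict subtrees above the siblings.
    have s2 := elim_parents T (T.siblings n c) hSP (fun k _ => hF k)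
      (fun Y => px n (Y n) * nodeFactor T π ρ Y c * go c (Y c)) fun k hk =>
        ((Indep.coord (fun h => disjoint_left.1
            (T.disjoint_tree hn (hSP hk) (fun e => hnS (e ▸ hk))) (T.self_mem_tree n)
              (subtree_subset T k h)) (px n)).mul
          (indep_nodeFactor_subtree T (hSP hk))).mul
          (Indep.coord (fun h => T.notMem_tree_parent (hSP hk) (subtree_subset T k h)) (go c))
    have s3 := Elim.sum (T.siblings n c)
      (fun Y => px n (Y n) * nodeFactor T π ρ Y c * go c (Y c) *
        ∏ k ∈ T.siblings n c, fo k (Y k))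
    have e3 : ∀ Y : Fin N → Fin 2, ∑ u ∈ assignments (T.siblings n c),
        (fun Y => px n (Y n) * nodeFactor T π ρ Y c * go c (Y c) *
          ∏ k ∈ T.siblings n c, fo k (Y k)) ((T.siblings n c).piecewise u Y) =
        px n (Y n) * ∑ u ∈ assignments (T.siblings n c),
          go c (Y c) * transProb ρ (Y c : ℕ) ((Y n : ℕ) * ∏ k ∈ T.siblings n c, (u k : ℕ)) *
            ∏ k ∈ T.siblings n c, fo k (u k) := by
      intro Y
      rw [mul_sum]
      refine sum_congr rfl fun u _ => ?_
      have e1 : ∏ k ∈ T.parents c, (((T.siblings n c).piecewise u Y k : Fin 2) : ℕ) =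
          (Y n : ℕ) * ∏ k ∈ T.siblings n c, (u k : ℕ) := by
        rw [← mul_prod_erase _ _ hn, ← sdiff_singleton_eq_erase]
        congr 1
        · simp [hnS]
        · exact prod_congr rfl fun k hk => by
            rw [piecewise_eq_of_mem _ _ _ (show k ∈ T.siblings n c from hk)]
      have e2 : ∏ k ∈ T.siblings n c, fo k ((T.siblings n c).piecewise u Y k) =
          ∏ k ∈ T.siblings n c, fo k (u k) := prod_congr rfl fun k hk => by simp [hk]
      simp only [nodeFactor, hcl, if_false, e1, e2, piecewise_eq_of_notMem _ _ _ hnS,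
        piecewise_eq_of_notMem _ _ _ hcS]
      ring
    rw [funext e3] at s3
    have s4 := Elim.sum {c} (fun Y : Fin N → Fin 2 =>
        px n (Y n) * ∑ u ∈ assignments (T.siblings n c),
          go c (Y c) * transProb ρ (Y c : ℕ) ((Y n : ℕ) * ∏ k ∈ T.siblings n c, (u k : ℕ)) *
            ∏ k ∈ T.siblings n c, fo k (u k))
    have e4 : ∀ Y : Fin N → Fin 2, ∑ v ∈ assignments {c}, (fun Y : Fin N → Fin 2 =>
        px n (Y n) * ∑ u ∈ assignments (T.siblings n c),
          go c (Y c) * transProb ρ (Y c : ℕ) ((Y n : ℕ) * ∏ k ∈ T.siblings n c, (u k : ℕ)) *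
            ∏ k ∈ T.siblings n c, fo k (u k)) (({c} : Finset (Fin N)).piecewise v Y) =
        go n (Y n) := by
      intro Y
      rw [hgo, hgiInt n c hc, sum_mul, ← sum_assignments_singleton c]
      refine sum_congr rfl fun v _ => ?_
      simp only [piecewise_eq_of_mem _ _ _ (mem_singleton_self c),
        piecewise_eq_of_notMem _ _ _ (show n ∉ ({c} : Finset (Fin N)) by simpa using hnc)]
      ring
    rw [funext e4] at s4
    have hcn : T.tree n ⊆ T.tree c := T.tree_subset (T.parent_mem_tree hn)
    have hSn : ∀ k ∈ T.siblings n c, T.tree k ⊆ T.pre n := fun k hk m hm =>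
      T.mem_pre.2 fun h => disjoint_left.1
        (T.disjoint_tree (hSP hk) hn (T.mem_siblings.1 hk).2) hm h
    have t1 := s1.mono (B := T.pre n) fun m hm => T.mem_pre.2 fun h => T.mem_pre.1 hm (hcn h)
    have t2 := s2.mono (B := T.pre n) fun m hm => by
      obtain ⟨k, hk, hm⟩ := mem_biUnion.1 hm
      exact hSn k hk (subtree_subset T k hm)
    have t3 := s3.mono (B := T.pre n) fun k hk => hSn k hk (T.self_mem_tree k)
    have t4 := s4.mono (B := T.pre n) (by
      simpa using T.mem_pre.2 (T.notMem_tree_parent hn))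
    refine Elim.trans ?_ (Elim.trans t2 (Elim.trans t3 t4))
    convert t1 using 2 with Y Y
    · rw [T.prod_pre hc]
      simp only [localWeight]
      ring
    · ring

/-- The full joint weight, with all labels other than those of `n` and its parents summed out. -/
lemma elim_family
    (hF : ∀ n, Elim (T.subtree n) (fun Y => ∏ m ∈ T.tree n, localWeight T π ρ px m Y)
      (fun Y => fo n (Y n))) (n : Fin N)
    (hB : Elim (T.pre n) (fun Y => px n (Y n) * ∏ m ∈ T.pre n, localWeight T π ρ px m Y)
      (fun Y => go n (Y n))) :
    Elim (insert n (T.parents n))ᶜ (fun Y => ∏ m, localWeight T π ρ px m Y)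
      (fun Y => go n (Y n) * nodeFactor T π ρ Y n * ∏ k ∈ T.parents n, fo k (Y k)) := by
  have hpre : ∀ m ∈ T.tree n, m ∉ T.pre n := fun m hm h => T.mem_pre.1 h hm
  have s1 := hB.mul_left
    (h := fun Y => nodeFactor T π ρ Y n *
      ∏ k ∈ T.parents n, ∏ m ∈ T.tree k, localWeight T π ρ px m Y)
    ((indep_nodeFactor T π ρ (hpre n (T.self_mem_tree n))
        (disjoint_left.2 fun k hk => hpre k (T.parent_mem_tree hk))).mul
      (Indep.prod _ fun k hk => indep_tree T π ρ px (disjoint_left.2 fun m hm =>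
        hpre m (T.tree_subset (T.parent_mem_tree hk) hm))))
  have s2 := elim_parents T (T.parents n) subset_rfl (fun k _ => hF k)
    (fun Y => go n (Y n) * nodeFactor T π ρ Y n) fun k hk =>
      (Indep.coord (fun h => T.notMem_tree_parent hk (subtree_subset T k h)) (go n)).mul
        (indep_nodeFactor_subtree T hk)
  have t1 := s1.mono (B := (insert n (T.parents n))ᶜ) fun m hm => by
    rw [mem_compl, mem_insert]
    rintro (rfl | h)
    · exact hpre _ (T.self_mem_tree _) hm
    · exact hpre _ (T.parent_mem_tree h) hm
  have t2 := s2.mono (B := (insert n (T.parents n))ᶜ) fun m hm => by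
    obtain ⟨k, hk, hmk⟩ := mem_biUnion.1 hm
    rw [mem_compl, mem_insert]
    rintro (rfl | h)
    · exact T.notMem_tree_parent hk (subtree_subset T k hmk)
    · by_cases he : m = k
      · subst he
        simp [RevTree.subtree] at hmk
      · exact disjoint_left.1 (T.disjoint_tree h hk he) (T.self_mem_tree m)
          (subtree_subset T k hmk)
  refine Elim.trans ?_ t2
  convert t1 using 2 with Y Y
  · rw [T.prod_univ_eq n, T.prod_tree n]
    simp only [localWeight]
    ring
  · ring

/-- Every labeling restricts to exactly one pair of a label of `n` and an assignment to its
parents. -/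
lemma sum_agree (n : Fin N) (W : (Fin N → Fin 2) → ℝ) :
    ∑ y : Fin 2, ∑ u ∈ assignments (T.parents n),
      ∑ Y ∈ univ.filter (fun Y : Fin N → Fin 2 =>
        ∀ t ∈ insert n (T.parents n), Y t = Function.update u n y t), W Y = ∑ Y, W Y := by
  rw [← sum_product', ← sum_fiberwise_of_maps_to
    (s := univ) (t := univ ×ˢ assignments (T.parents n))
    (g := fun Y : Fin N → Fin 2 => (Y n, (T.parents n).piecewise Y (fun _ => 0)))
    (by intro Y _; simp +contextual [assignments])]
  refine sum_congr rfl ?_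
  rintro ⟨y, u⟩ hu
  simp only [assignments, mem_product, mem_filter, mem_univ, true_and] at hu
  refine sum_congr (filter_congr fun Y _ => ?_) fun _ _ => rfl
  rw [Prod.mk.injEq, forall_mem_insert, Function.update_self]
  refine and_congr_right fun _ => ⟨fun h => ?_, fun h k hk => ?_⟩
  · ext m : 1
    by_cases hm : m ∈ T.parents n
    · rw [piecewise_eq_of_mem _ _ _ hm, h m hm,
        Function.update_of_ne (ne_of_mem_of_not_mem hm (T.notMem_parents_self n))]
    · rw [piecewise_eq_of_notMem _ _ _ hm, hu m hm]
  · rw [Function.update_of_ne (ne_of_mem_of_not_mem hk (T.notMem_parents_self n))]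
    exact (piecewise_eq_of_mem _ _ _ hk).symm.trans (congrFun h k)

end Weights

/-! ### The posterior of a node and its parents -/

/-- Theorem 1, part 4: when `P(X) > 0`, for every non-leaf node `n`
the normalized quantity `P′(y_n, y_{k∈P_n}) / Σ P′` equals the joint posterior
`P(y_n, y_{k∈P_n} | X) = P(X, y_n, y_{k∈P_n}) / P(X)`. -/
theorem normalized_parent_child_marginal_eq_posterior
{N : ℕ} (T : RevTree N) (π ρ : ℝ)
    (hπ : π ∈ Set.Ioo (0 : ℝ) 1) (hρ : ρ ∈ Set.Ioo (0 : ℝ) 1)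
    (px : Fin N → Fin 2 → ℝ) (hpx : ∀ n y, 0 ≤ px n y)
(fi fo : Fin N → Fin 2 → ℝ)
    (hfiLeaf : ∀ n, T.IsLeaf n → ∀ y : Fin 2, fi n y = leafPrior π y)
    (hfiInt : ∀ n, ¬ T.IsLeaf n → ∀ y : Fin 2,
      fi n y = ∑ u ∈ assignments (T.parents n),
        transProb ρ (y : ℕ) (∏ k ∈ T.parents n, (u k : ℕ)) *
          ∏ k ∈ T.parents n, fo k (u k))
    (hfo : ∀ n y, fo n y = fi n y * px n y)
(gi go : Fin N → Fin 2 → ℝ)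
    (hgiRoot : ∀ y : Fin 2, gi T.root y = 1)
    (hgiInt : ∀ n c, T.child n = some c → ∀ y : Fin 2,
      gi n y = ∑ yc : Fin 2, ∑ u ∈ assignments (T.siblings n c),
        go c yc * transProb ρ (yc : ℕ) ((y : ℕ) * ∏ k ∈ T.siblings n c, (u k : ℕ)) *
          ∏ k ∈ T.siblings n c, fo k (u k))
    (hgo : ∀ n y, go n y = gi n y * px n y)
    (hPX : 0 < ∑ Y : Fin N → Fin 2,
      (∏ m, px m (Y m)) * ∏ m, nodeFactor T π ρ Y m) :
    ∀ n : Fin N, ¬ T.IsLeaf n → ∀ (y : Fin 2), ∀ u ∈ assignments (T.parents n),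
      ((∏ k ∈ T.parents n, fo k (u k)) * go n y *
            transProb ρ (y : ℕ) (∏ k ∈ T.parents n, (u k : ℕ))) /
          (∑ y' : Fin 2, ∑ u' ∈ assignments (T.parents n),
            (∏ k ∈ T.parents n, fo k (u' k)) * go n y' *
              transProb ρ (y' : ℕ) (∏ k ∈ T.parents n, (u' k : ℕ))) =
        marginal T π ρ px Finset.univ (insert n (T.parents n))
            (Function.update u n y) /
          (∑ Y : Fin N → Fin 2,
            (∏ m, px m (Y m)) * ∏ m, nodeFactor T π ρ Y m) := by
  intro n hn y u hu
  have hF := elim_forward T hfiLeaf hfiInt hfo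
  obtain ⟨C, hC, hE⟩ := elim_family T hF n (elim_backward T hF hgiRoot hgiInt hgo n)
  set K : ℝ := C * ((∏ t : Fin N, if t ∈ insert n (T.parents n) then 1 else 2 : ℕ) : ℝ) with hK
  have hK0 : K ≠ 0 := by
    refine mul_ne_zero hC.ne' (Nat.cast_ne_zero.2 (prod_ne_zero_iff.2 fun t _ => ?_))
    split_ifs <;> norm_num
  -- The constant `K` depends on `n` only, so it cancels in the normalized quotient.
  have key : ∀ (y : Fin 2) (u : Fin N → Fin 2),
      marginal T π ρ px univ (insert n (T.parents n)) (Function.update u n y) =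
        K * ((∏ k ∈ T.parents n, fo k (u k)) * go n y *
          transProb ρ (y : ℕ) (∏ k ∈ T.parents n, (u k : ℕ))) := by
    intro y u
    have h := hE (fun Y => if ∀ t ∈ insert n (T.parents n), Y t = Function.update u n y t
        then 1 else 0) (by
      intro Y Y' e
      refine if_congr (forall₂_congr fun t ht => ?_) rfl rfl
      rw [e t (by rwa [mem_compl, not_not])])
    simp only [ite_mul, one_mul, zero_mul, ← sum_filter] at h
    simp only [marginal, ← prod_mul_distrib]
    refine h.trans ?_
    rw [hK, mul_assoc, ← card_agree _ (Function.update u n y), ← nsmul_eq_mul, ← sum_const]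
    congr 1
    refine sum_congr rfl fun Y hY => ?_
    have hY := (mem_filter.1 hY).2
    rw [forall_mem_insert, Function.update_self] at hY
    have hk : ∀ k ∈ T.parents n, Y k = u k := fun k hk => by
      rw [hY.2 k hk, Function.update_of_ne (ne_of_mem_of_not_mem hk (T.notMem_parents_self n))]
    rw [nodeFactor, if_neg hn, hY.1, prod_congr rfl fun k h => by rw [hk k h],
      prod_congr (s₁ := T.parents n) (f := fun k => fo k (Y k)) rfl fun k h => by rw [hk k h]]
    ring
  have hsum := sum_agree T n
    (fun Y : Fin N → Fin 2 => (∏ m, px m (Y m)) * ∏ m, nodeFactor T π ρ Y m)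
  have hm : ∀ y u, ∑ Y ∈ univ.filter (fun Y : Fin N → Fin 2 =>
      ∀ t ∈ insert n (T.parents n), Y t = Function.update u n y t),
      (∏ m, px m (Y m)) * ∏ m, nodeFactor T π ρ Y m =
      K * ((∏ k ∈ T.parents n, fo k (u k)) * go n y *
          transProb ρ (y : ℕ) (∏ k ∈ T.parents n, (u k : ℕ))) := key
  simp_rw [hm, ← mul_sum] at hsum
  rw [key, ← hsum, mul_div_mul_left _ _ hK0]
end
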